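/- arXiv:2008.04458 — 2 statements merged into one kernel-verified Lean document; each statement's English description precedes it below -/
import Mathlib

section
/- Let (V_{g,n}) be a (★)-family such that in addition the total degree of each V_{g,n} is at most 6g−6+2n, and let V^M_{g,n} denote the homogeneous component of V_{g,n} of degree 6g−6+2n. Then for every (g,n) with 2g−2+n ≥ 2 the following identity of polynomials holds: ∂/∂L_1 (L_1 V^M_{g,n}(L_1,…,L_n)) = ½ ∫₀^{L_1}∫₀^{L_1−y} V^M_{g−1,n+1}(x,y,L_2,…,L_n)·xy dx dy + ½ Σ ∫₀^{L_1}∫₀^{L_1−y} V^M_{g_1,|I|+1}(x,L_I)·V^M_{g_2,|J|+1}(y,L_J)·xy dx dy + ½ Σ_{j=2}^n (∫₀^{L_1+L_j} + ∫₀^{L_1−L_j}) V^M_{g,n−1}(x,L_2,…,L̂_j,…,L_n)·x dx, where the middle sum runs over ordered pairs (g_1,I),(g_2,J) with g_1+g_2 = g and I ⊔ J = {2,…,n}, terms involving (g',n') with 2g'−2+n' ≤ 0 omitted. -/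
/-!
Rescaling argument. Put `d = 6g - 6 + 2n` and let `W_{g,n}(s, z) = s^d V_{g,n}(z / s)`. The degree
bound says exactly that this is a polynomial in `(s, z)` (`scaled`), and its value at `s = 0` is the
leading part `V^M_{g,n}(z)` (`scaled_zero`). Each term on the right-hand side of (★) has the same
weight under scaling (`newRHS_smul`), so (★) at the point `L / s` becomes

  `h(s, L₁ + 2πis) - h(s, L₁ - 2πis) = 4πi s · newRHS (W(s, ·)) L`, `h(s, z) = z W_{g,n}(s, z, L')`

(`star_scaled`), valid for `s ≠ 0` and trivially for `s = 0`. The derivative of the left-hand side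
at `s = 0` is `4πi ∂h/∂z (0, L₁)`, by the chain rule for the jointly differentiable `h`. The
derivative of the right-hand side at `s = 0` is `4πi · newRHS (W(0, ·)) L`, because the right-hand
side is continuous in `s` (`continuous_newRHS`). Equating the two gives the claim.
-/

open scoped Real Topology
open MeasureTheory Filter

noncomputable section

/-- `StableIdx g n` means `2g - 2 + n > 0`, i.e. `(g,n)` is a stable index. -/
abbrev StableIdx (g n : ℕ) : Prop := 2 < 2 * g + n

/-- The integral `∫₀ᵃ f` of an entire (polynomial) integrand `f`: it equals `P a`, where `P`
is the antiderivative of `f` with `P 0 = 0`. -/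
def pInt (f : ℂ → ℂ) (a : ℂ) : ℂ := a * ∫ s in (0:ℝ)..(1:ℝ), f ((s : ℂ) * a)

/-- Insert `x` in front of the subtuple of `L` indexed by `I` (taken in increasing order). -/
def tupIns {β : Type*} {n : ℕ} (x : β) (L : Fin n → β) (I : Finset (Fin n)) :
    Fin (I.card + 1) → β :=
  Fin.cons x fun i => L ((I.orderIsoOfFin rfl) i).1

/-- Evaluation of a real multivariate polynomial at complex points. -/
def ev {n : ℕ} (p : MvPolynomial (Fin n) ℝ) (z : Fin n → ℂ) : ℂ :=
  MvPolynomial.eval₂ (algebraMap ℝ ℂ) z p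

/-- A real tuple regarded as a complex tuple. -/
def cplx {m : ℕ} (L : Fin m → ℝ) : Fin m → ℂ := fun i => (L i : ℂ)

/-- Right-hand side of the new recursion (★), with terms involving unstable indices omitted. -/
def newRHS (V : (g n : ℕ) → (Fin n → ℂ) → ℂ) (g m : ℕ) (L : Fin (m + 1) → ℂ) : ℂ :=
  (if 1 ≤ g ∧ StableIdx (g - 1) (m + 2) then
    (1 / 2 : ℂ) * pInt (fun y => pInt (fun x =>
      V (g - 1) (m + 2) (Fin.cons x (Fin.cons y (Fin.tail L))) * x * y) (L 0 - y)) (L 0)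
  else 0)
  + (1 / 2 : ℂ) * ∑ g₁ ∈ Finset.range (g + 1),
      ∑ I ∈ (Finset.univ : Finset (Fin m)).powerset,
      (if StableIdx g₁ (I.card + 1) ∧ StableIdx (g - g₁) (Iᶜ.card + 1) then
        pInt (fun y => pInt (fun x =>
          V g₁ (I.card + 1) (tupIns x (Fin.tail L) I) *
          V (g - g₁) (Iᶜ.card + 1) (tupIns y (Fin.tail L) Iᶜ) * x * y) (L 0 - y)) (L 0)
      else 0)
  + (1 / 2 : ℂ) * ∑ j : Fin m,
      (if StableIdx g (({j}ᶜ : Finset (Fin m)).card + 1) then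
        pInt (fun x => V g (({j}ᶜ : Finset (Fin m)).card + 1)
            (tupIns x (Fin.tail L) ({j}ᶜ : Finset (Fin m))) * x) (L 0 + L j.succ)
        + pInt (fun x => V g (({j}ᶜ : Finset (Fin m)).card + 1)
            (tupIns x (Fin.tail L) ({j}ᶜ : Finset (Fin m))) * x) (L 0 - L j.succ)
      else 0)

/-- The new recursion (★) at `(g, n) = (g, m+1)`. -/
def StarEq (V : (g n : ℕ) → (Fin n → ℂ) → ℂ) (g m : ℕ) (L : Fin (m + 1) → ℂ) : Prop :=
  ((L 0 + 2 * (π : ℂ) * Complex.I) *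
      V g (m + 1) (Fin.cons (L 0 + 2 * (π : ℂ) * Complex.I) (Fin.tail L)) -
    (L 0 - 2 * (π : ℂ) * Complex.I) *
      V g (m + 1) (Fin.cons (L 0 - 2 * (π : ℂ) * Complex.I) (Fin.tail L))) /
    (4 * (π : ℂ) * Complex.I) = newRHS V g m L

/-- A (★)-family: real polynomials `V_{g,n}`, symmetric and even in each variable,
with the correct initial values, satisfying the new recursion (★) at all complex points. -/
structure StarFamily where
  V : (g n : ℕ) → MvPolynomial (Fin n) ℝ
  symm : ∀ g n, StableIdx g n → ∀ (σ : Equiv.Perm (Fin n)) (z : Fin n → ℂ),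
    ev (V g n) (z ∘ σ) = ev (V g n) z
  even : ∀ g n, StableIdx g n → ∀ (i : Fin n) (z : Fin n → ℂ),
    ev (V g n) (Function.update z i (-(z i))) = ev (V g n) z
  v03 : ∀ z : Fin 3 → ℂ, ev (V 0 3) z = 1
  v11 : ∀ z : Fin 1 → ℂ, ev (V 1 1) z = (z 0 ^ 2 + 4 * (π : ℂ) ^ 2) / 48
  star : ∀ g m, 4 ≤ 2 * g + (m + 1) → ∀ L : Fin (m + 1) → ℂ,
    StarEq (fun g' n' => ev (V g' n')) g m L

/-- The recursion (Equ_Mirz_Intersection) at `(g, n) = (g, m+1)`. -/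
def InterEq (V : (g n : ℕ) → (Fin n → ℂ) → ℂ) (g m : ℕ) (L : Fin (m + 1) → ℂ) : Prop :=
  deriv (fun z : ℂ => z * V g (m + 1) (Fin.cons z (Fin.tail L))) (L 0) = newRHS V g m L

/-! ### Scaling and continuity of the right-hand side -/

theorem pInt_mul (f : ℂ → ℂ) (c a : ℂ) : pInt f (c * a) = c * pInt (fun x => f (c * x)) a := by
  simp only [pInt, mul_assoc, mul_left_comm c]

theorem pInt_const_mul (f : ℂ → ℂ) (k a : ℂ) : pInt (fun x => k * f x) a = k * pInt f a := by
  simp only [pInt, intervalIntegral.integral_const_mul, mul_left_comm k]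

theorem continuous_pInt {X : Type*} [TopologicalSpace X] {f : X → ℂ → ℂ} {a : X → ℂ}
    (hf : Continuous fun q : X × ℂ => f q.1 q.2) (ha : Continuous a) :
    Continuous fun p => pInt (f p) (a p) := by
  unfold pInt
  refine ha.mul ?_
  apply intervalIntegral.continuous_parametric_intervalIntegral_of_continuous'
  exact hf.comp (f := fun q : X × ℝ => (q.1, (q.2 : ℂ) * a q.1)) (by fun_prop)

theorem tupIns_smul {n : ℕ} (c x : ℂ) (L : Fin n → ℂ) (I : Finset (Fin n)) :
    tupIns (c * x) (c • L) I = c • tupIns x L I := by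
  funext i
  refine Fin.cases ?_ (fun i => ?_) i <;> simp [tupIns]

theorem continuous_tupIns {n : ℕ} (L : Fin n → ℂ) (I : Finset (Fin n)) :
    Continuous fun x : ℂ => tupIns x L I := by
  refine continuous_pi fun i => ?_
  refine Fin.cases ?_ (fun i => ?_) i <;> simp only [tupIns, Fin.cons_zero, Fin.cons_succ] <;>
    fun_prop

theorem tail_smul {m : ℕ} (c : ℂ) (L : Fin (m + 1) → ℂ) :
    Fin.tail (c • L) = c • Fin.tail L := rfl

theorem cons_smul {m : ℕ} (c x : ℂ) (L : Fin m → ℂ) :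
    (Fin.cons (c * x) (c • L) : Fin (m + 1) → ℂ) = c • (Fin.cons x L : Fin (m + 1) → ℂ) := by
  funext i
  refine Fin.cases ?_ (fun i => ?_) i <;> simp

/-- The right-hand side of (★) is compatible with the weights `6g - 6 + 2n`: each `V` contributes
its own weight, and each integration variable contributes `2`. -/
theorem newRHS_smul {U V : (g n : ℕ) → (Fin n → ℂ) → ℂ} {c : ℂ}
    (h : ∀ g n, StableIdx g n → ∀ z, V g n (c • z) = c ^ (6 * g + 2 * n - 6) * U g n z)
    (g m : ℕ) (L : Fin (m + 1) → ℂ) :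
    newRHS V g m (c • L) = c ^ (6 * g + 2 * (m + 1) - 6) * newRHS U g m L := by
  have hL : ∀ i, (c • L) i = c * L i := fun _ => rfl
  unfold newRHS
  generalize hd : 6 * g + 2 * (m + 1) - 6 = d
  simp only [mul_add, mul_left_comm _ (1 / 2 : ℂ), Finset.mul_sum, mul_ite, mul_zero]
  refine congrArg₂ (· + ·) (congrArg₂ (· + ·) ?_ ?_) ?_
  · split_ifs with hs
    · refine congrArg _ ?_
      rw [hL, pInt_mul, ← pInt_const_mul _ c, ← pInt_const_mul _ (c ^ d)]
      congr 1
      funext y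
      rw [← mul_sub c, pInt_mul, ← pInt_const_mul _ c, ← pInt_const_mul _ c,
        ← pInt_const_mul _ (c ^ d)]
      congr 1
      funext x
      rw [tail_smul, cons_smul, cons_smul, h _ _ hs.2]
      have : d = 4 + (6 * (g - 1) + 2 * (m + 2) - 6) := by
        have := hs.1; have := hs.2; unfold StableIdx at this; omega
      rw [this, pow_add]
      ring
    · rfl
  · refine Finset.sum_congr rfl fun g₁ hg₁ => Finset.sum_congr rfl fun I _ => ?_
    split_ifs with hs
    · refine congrArg _ ?_
      rw [hL, pInt_mul, ← pInt_const_mul _ c, ← pInt_const_mul _ (c ^ d)]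
      congr 1
      funext y
      rw [← mul_sub c, pInt_mul, ← pInt_const_mul _ c, ← pInt_const_mul _ c,
        ← pInt_const_mul _ (c ^ d)]
      congr 1
      funext x
      rw [tail_smul, tupIns_smul, tupIns_smul, h _ _ hs.1, h _ _ hs.2]
      have : d = 4 + (6 * g₁ + 2 * (I.card + 1) - 6)
          + (6 * (g - g₁) + 2 * (Iᶜ.card + 1) - 6) := by
        have h1 := hs.1
        have h2 := hs.2
        have h3 := I.card_add_card_compl
        rw [Fintype.card_fin] at h3
        have h4 := Finset.mem_range.1 hg₁
        unfold StableIdx at h1 h2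
        omega
      rw [this, pow_add, pow_add]
      ring
    · simp
  · refine Finset.sum_congr rfl fun j _ => ?_
    split_ifs with hs
    · have : d = 2 + (6 * g + 2 * ((({j}ᶜ : Finset (Fin m)).card) + 1) - 6) := by
        have h3 := Finset.card_add_card_compl ({j} : Finset (Fin m))
        rw [Fintype.card_fin, Finset.card_singleton] at h3
        unfold StableIdx at hs
        omega
      rw [hL, hL, ← mul_add c, ← mul_sub c, pInt_mul, pInt_mul]
      simp only [tail_smul, tupIns_smul, h _ _ hs]
      rw [this, pow_add]
      simp only [mul_assoc, mul_left_comm _ c, pInt_const_mul]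
      ring
    · simp

theorem continuous_newRHS {X : Type*} [TopologicalSpace X]
    {W : X → (g n : ℕ) → (Fin n → ℂ) → ℂ}
    (h : ∀ g n, Continuous fun q : X × (Fin n → ℂ) => W q.1 g n q.2)
    (g m : ℕ) (L : Fin (m + 1) → ℂ) : Continuous fun s => newRHS (W s) g m L := by
  unfold newRHS
  refine ((?_ : Continuous _).add (continuous_const.mul ?_)).add (continuous_const.mul ?_)
  · split_ifs with hs
    · refine continuous_const.mul (continuous_pInt (continuous_pInt ?_ (by fun_prop)) (by fun_prop))
      refine (Continuous.mul ?_ (by fun_prop)).mul (by fun_prop)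
      refine (h _ _).comp (f := fun q : (X × ℂ) × ℂ => (q.1.1, _)) (.prodMk (by fun_prop) ?_)
      have hy : Continuous fun q : (X × ℂ) × ℂ =>
          (Fin.cons q.1.2 (Fin.tail L) : Fin (m + 1) → ℂ) :=
        Continuous.finCons (A := fun _ => ℂ) (continuous_snd.comp continuous_fst) continuous_const
      exact Continuous.finCons (A := fun _ => ℂ) continuous_snd hy
    · fun_prop
  · refine continuous_finsetSum _ fun g₁ _ => continuous_finsetSum _ fun I _ => ?_
    split_ifs with hs
    · refine continuous_pInt (continuous_pInt ?_ (by fun_prop)) (by fun_prop)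
      refine ((Continuous.mul ?_ ?_).mul (by fun_prop)).mul (by fun_prop)
      · exact (h _ _).comp (f := fun q : (X × ℂ) × ℂ => (q.1.1, _))
          (.prodMk (by fun_prop) ((continuous_tupIns _ I).comp continuous_snd))
      · exact (h _ _).comp (f := fun q : (X × ℂ) × ℂ => (q.1.1, _))
          (.prodMk (by fun_prop) ((continuous_tupIns _ Iᶜ).comp
            (continuous_snd.comp continuous_fst)))
    · fun_prop
  · refine continuous_finsetSum _ fun j _ => ?_
    split_ifs with hs
    · have key : Continuous fun q : X × ℂ => W q.1 g (({j}ᶜ : Finset (Fin m)).card + 1)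
          (tupIns q.2 (Fin.tail L) ({j}ᶜ : Finset (Fin m))) * q.2 :=
        ((h _ _).comp (f := fun q : X × ℂ => (q.1, _))
          (.prodMk (by fun_prop) ((continuous_tupIns _ _).comp continuous_snd))).mul continuous_snd
      exact (continuous_pInt key continuous_const).add (continuous_pInt key continuous_const)
    · fun_prop

/-! ### Rescaled polynomials -/

theorem differentiable_ev {E : Type*} [NormedAddCommGroup E] [NormedSpace ℂ E] {n : ℕ}
    (p : MvPolynomial (Fin n) ℝ) {a : E → Fin n → ℂ} (ha : Differentiable ℂ a) :
    Differentiable ℂ fun x => ev p (a x) := by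
  have ha' := differentiable_pi.1 ha
  simp only [ev, MvPolynomial.eval₂_eq']
  fun_prop

theorem ev_smul {n k : ℕ} {p : MvPolynomial (Fin n) ℝ} (hp : p.IsHomogeneous k) (c : ℂ)
    (z : Fin n → ℂ) : ev p (c • z) = c ^ k * ev p z := by
  simp only [ev, MvPolynomial.eval₂_eq, Finset.mul_sum]
  refine Finset.sum_congr rfl fun d hd => ?_
  have hk : k = ∑ i ∈ d.support, d i := by
    rw [← hp (MvPolynomial.mem_support_iff.1 hd), Finsupp.weight_apply]
    simp [Finsupp.sum]
  simp only [Pi.smul_apply, smul_eq_mul, mul_pow, Finset.prod_mul_distrib, hk,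
    Finset.prod_pow_eq_pow_sum]
  ring

/-- The rescaling `s ^ d * p (z / s)` of a polynomial `p`, written through the homogeneous
components of degree at most `d` so that it also makes sense at `s = 0`. -/
def scaled {n : ℕ} (p : MvPolynomial (Fin n) ℝ) (d : ℕ) (s : ℂ) (z : Fin n → ℂ) : ℂ :=
  ∑ k ∈ Finset.range (d + 1), s ^ (d - k) * ev (MvPolynomial.homogeneousComponent k p) z

theorem scaled_zero {n : ℕ} (p : MvPolynomial (Fin n) ℝ) (d : ℕ) :
    scaled p d 0 = ev (MvPolynomial.homogeneousComponent d p) := by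
  funext z
  unfold scaled
  rw [Finset.sum_range_succ, Finset.sum_eq_zero]
  · simp
  · intro k hk
    rw [zero_pow (by have := Finset.mem_range.1 hk; omega), zero_mul]

theorem ev_eq_sum {n d : ℕ} {p : MvPolynomial (Fin n) ℝ} (hp : p.totalDegree ≤ d)
    (z : Fin n → ℂ) :
    ev p z = ∑ k ∈ Finset.range (d + 1), ev (MvPolynomial.homogeneousComponent k p) z := by
  have h : p = ∑ k ∈ Finset.range (d + 1), MvPolynomial.homogeneousComponent k p := by
    conv_lhs => rw [← MvPolynomial.sum_homogeneousComponent p]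
    refine Finset.sum_subset (Finset.range_mono (by omega)) fun k _ hk => ?_
    exact MvPolynomial.homogeneousComponent_eq_zero _ _
      (by have := mt Finset.mem_range.2 hk; omega)
  conv_lhs => rw [h]
  simp only [ev, MvPolynomial.eval₂_sum]

theorem ev_inv_smul {n d : ℕ} {p : MvPolynomial (Fin n) ℝ} (hp : p.totalDegree ≤ d)
    {s : ℂ} (hs : s ≠ 0) (z : Fin n → ℂ) : ev p (s⁻¹ • z) = s⁻¹ ^ d * scaled p d s z := by
  rw [ev_eq_sum hp, scaled, Finset.mul_sum]
  refine Finset.sum_congr rfl fun k hk => ?_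
  rw [ev_smul (MvPolynomial.homogeneousComponent_isHomogeneous k p), ← mul_assoc]
  obtain ⟨e, rfl⟩ := Nat.exists_eq_add_of_le (Nat.lt_succ_iff.1 (Finset.mem_range.1 hk))
  rw [Nat.add_sub_cancel_left, pow_add, mul_assoc (s⁻¹ ^ k), ← mul_pow, inv_mul_cancel₀ hs,
    one_pow, mul_one]

theorem differentiable_scaled {E : Type*} [NormedAddCommGroup E] [NormedSpace ℂ E] {n : ℕ}
    (p : MvPolynomial (Fin n) ℝ) (d : ℕ) {b : E → ℂ} (hb : Differentiable ℂ b)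
    {a : E → Fin n → ℂ} (ha : Differentiable ℂ a) :
    Differentiable ℂ fun x => scaled p d (b x) (a x) := by
  have := fun k => differentiable_ev (MvPolynomial.homogeneousComponent k p) ha
  unfold scaled
  fun_prop

/-- The recursion (★) at the point `s⁻¹ • L`, multiplied by the appropriate power of `s`
and cleared of the denominator `4πi`. -/
theorem star_scaled (F : StarFamily)
    (hdeg : ∀ g n, StableIdx g n → (F.V g n).totalDegree ≤ 6 * g + 2 * n - 6)
    {g m : ℕ} (hgm : 4 ≤ 2 * g + (m + 1)) (L : Fin (m + 1) → ℂ) (s : ℂ) :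
    (L 0 + 2 * (π : ℂ) * Complex.I * s) *
        scaled (F.V g (m + 1)) (6 * g + 2 * (m + 1) - 6) s
          (Fin.cons (L 0 + 2 * (π : ℂ) * Complex.I * s) (Fin.tail L)) -
      (L 0 - 2 * (π : ℂ) * Complex.I * s) *
        scaled (F.V g (m + 1)) (6 * g + 2 * (m + 1) - 6) s
          (Fin.cons (L 0 - 2 * (π : ℂ) * Complex.I * s) (Fin.tail L)) =
      s * (4 * (π : ℂ) * Complex.I *
        newRHS (fun g' n' => scaled (F.V g' n') (6 * g' + 2 * n' - 6) s) g m L) := by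
  rcases eq_or_ne s 0 with rfl | hs
  · simp
  have hst : StableIdx g (m + 1) := by unfold StableIdx; omega
  have key := F.star g m hgm (s⁻¹ • L)
  unfold StarEq at key
  beta_reduce at key
  rw [newRHS_smul (fun g n h z => ev_inv_smul (hdeg g n h) hs z)] at key
  have hc : (4 * (π : ℂ) * Complex.I) ≠ 0 := by
    simp [Real.pi_ne_zero, Complex.I_ne_zero]
  have e1 : (s⁻¹ • L) 0 + 2 * (π : ℂ) * Complex.I
      = s⁻¹ * (L 0 + 2 * (π : ℂ) * Complex.I * s) := by
    simp only [Pi.smul_apply, smul_eq_mul]; field_simp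
  have e2 : (s⁻¹ • L) 0 - 2 * (π : ℂ) * Complex.I
      = s⁻¹ * (L 0 - 2 * (π : ℂ) * Complex.I * s) := by
    simp only [Pi.smul_apply, smul_eq_mul]; field_simp
  rw [e1, e2, tail_smul, cons_smul, cons_smul, ev_inv_smul (hdeg _ _ hst) hs,
    ev_inv_smul (hdeg _ _ hst) hs, div_eq_iff hc] at key
  have hd : s⁻¹ ^ (6 * g + 2 * (m + 1) - 6) ≠ 0 := pow_ne_zero _ (inv_ne_zero hs)
  refine mul_left_cancel₀ (mul_ne_zero (inv_ne_zero hs) hd) ?_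
  have hss : s⁻¹ * s = 1 := inv_mul_cancel₀ hs
  generalize s⁻¹ = t at key hss ⊢
  linear_combination key - t ^ (6 * g + 2 * (m + 1) - 6) * (4 * (π : ℂ) * Complex.I *
    newRHS (fun g' n' => scaled (F.V g' n') (6 * g' + 2 * n' - 6) s) g m L) * hss

/-! ### Differentiation at `s = 0` -/

/-- The derivative at `s = 0` of `h (s, a + c s) - h (s, a - c s)` only sees the partial derivative
of `h` in the second variable, since the two contributions of the partial derivative in `s`
cancel. -/
theorem deriv_eq_of_symm_diff {h : ℂ × ℂ → ℂ} (hh : Differentiable ℂ h) {c a : ℂ} (hc : c ≠ 0)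
    {R : ℂ → ℂ} (hR : Continuous R)
    (heq : ∀ s, h (s, a + c * s) - h (s, a - c * s) = s * (2 * c * R s)) :
    deriv (fun z => h (0, z)) a = R 0 := by
  set D := fderiv ℂ h (0, a) with hD
  have hF : HasFDerivAt h D (0, a) := (hh _).hasFDerivAt
  have hz : HasDerivAt (fun z => h (0, z)) (D (0, 1)) a :=
    hF.comp_hasDerivAt a ((hasDerivAt_const a (0 : ℂ)).prodMk (hasDerivAt_id a))
  have hl : ∀ b : ℂ, HasDerivAt (fun s => h (s, a + b * s)) (D (1, b)) 0 := by
    intro b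
    have hb : HasDerivAt (fun s : ℂ => (s, a + b * s)) (1, b) 0 :=
      (hasDerivAt_id (0 : ℂ)).prodMk
        (by simpa using ((hasDerivAt_id (0 : ℂ)).const_mul b).const_add a)
    exact HasFDerivAt.comp_hasDerivAt (f := fun s : ℂ => (s, a + b * s)) (0 : ℂ)
      (by simpa using hF) hb
  have h1 := (hl c).sub (hl (-c))
  have h2 : HasDerivAt (fun s => s * (2 * c * R s)) (2 * c * R 0) 0 := by
    -- Continuity of `R` suffices here: the slope at `0` of `s * f s` is `f s`.
    rw [hasDerivAt_iff_tendsto_slope]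
    have ht : Tendsto (fun s => 2 * c * R s) (𝓝[≠] 0) (𝓝 (2 * c * R 0)) :=
      ((continuous_const.mul hR).tendsto 0).mono_left nhdsWithin_le_nhds
    refine ht.congr' ?_
    filter_upwards [self_mem_nhdsWithin] with s hs
    have hs' : s ≠ 0 := hs
    simp [slope_def_field, hs']
  have h3 : D (1, c) - D (1, -c) = 2 * c * R 0 := by
    refine h1.unique (h2.congr_of_eventuallyEq (.of_forall fun s => ?_))
    simpa [sub_eq_add_neg] using heq s
  have h4 : D (1, c) - D (1, -c) = 2 * c * D (0, 1) := by
    rw [← map_sub, ← smul_eq_mul, ← map_smul]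
    congr 1
    simp [two_mul]
  rw [hz.deriv]
  exact mul_left_cancel₀ (mul_ne_zero two_ne_zero hc) (h4.symm.trans h3)


theorem continuous_newRHS_scaled (F : StarFamily) (g m : ℕ) (L : Fin (m + 1) → ℂ) :
    Continuous fun s : ℂ =>
      newRHS (fun g' n' => scaled (F.V g' n') (6 * g' + 2 * n' - 6) s) g m L := by
  refine continuous_newRHS (fun g' n' => ?_) g m L
  exact (differentiable_scaled _ _ differentiable_fst differentiable_snd).continuous

theorem differentiable_mul_scaled_cons {m : ℕ} (p : MvPolynomial (Fin (m + 1)) ℝ) (d : ℕ)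
    (t : Fin m → ℂ) :
    Differentiable ℂ fun q : ℂ × ℂ => q.2 * scaled p d q.1 (Fin.cons q.2 t) := by
  refine differentiable_snd.mul (differentiable_scaled _ _ differentiable_fst ?_)
  refine differentiable_pi.2 fun i => ?_
  refine Fin.cases ?_ (fun i => ?_) i <;> simp only [Fin.cons_zero, Fin.cons_succ] <;> fun_prop

/-- For a (★)-family whose members have total degree at most `6g - 6 + 2n`,
the top-degree homogeneous components `V^M_{g,n}` satisfy (Equ_Mirz_Intersection). -/
theorem leading_terms_satisfy_intersection_recursion (F : StarFamily)
    (hdeg : ∀ g n, StableIdx g n → (F.V g n).totalDegree ≤ 6 * g + 2 * n - 6) :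
    ∀ g m, 4 ≤ 2 * g + (m + 1) → ∀ L : Fin (m + 1) → ℂ,
      InterEq (fun g' n' =>
        ev (MvPolynomial.homogeneousComponent (6 * g' + 2 * n' - 6) (F.V g' n'))) g m L := by
  intro g m hgm L
  unfold InterEq
  simp only [← scaled_zero]
  have hc : 2 * (π : ℂ) * Complex.I ≠ 0 := by simp [Real.pi_ne_zero, Complex.I_ne_zero]
  refine deriv_eq_of_symm_diff (differentiable_mul_scaled_cons _ _ _) hc
    (continuous_newRHS_scaled F g m L) fun s => ?_
  have hstar := star_scaled F hdeg hgm L s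
  rw [show 4 * (π : ℂ) * Complex.I = 2 * (2 * (π : ℂ) * Complex.I) by ring] at hstar
  exact hstar

end
end

section
/- Let (V_{g,n}) be a (★)-family and fix (g,n) with n ≥ 2 and 2g−3+n > 0. Assume moreover that ∂V_{g,n}/∂L_1(2πi, L_2,…,L_n) = 2πi·(2g−3+n)·V_{g,n−1}(L_2,…,L_n) for all complex L_2,…,L_n. Then ∂²V_{g,n}/∂L_1²(2πi, L_2,…,L_n) = Σ_{k=2}^n ∂/∂L_k (L_k·V_{g,n−1}(L_2,…,L_n)) − 2(2g−3+n)·V_{g,n−1}(L_2,…,L_n) for all complex L_2,…,L_n. -/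
/-!
Fix `t = (L₂, …, Lₙ)`, put `a = 2πi` and let `G(z) = z V_{g,n}(z, t)`, an odd polynomial. The
result comes from applying `d²/dz²` at `z = L₁ = 0` to the recursion.

* On the left, oddness of `G''` gives `(G''(a) - G''(-a)) / (2a) = G''(a) / a`, which is
  `V''(a) + 2 V'(a) / a`; the first-derivative hypothesis evaluates `V'(a)`.
* On the right, rescaling `y = s z`, `x = r (1 - s) z` shows that each double integral is `z⁴` times
  a continuous function of `z` (`DivFour.pInt_pInt`), so these terms do not contribute.
* The `j`-th remaining term is `½ (A(z + Lⱼ) + A(z - Lⱼ))` with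
  `A'(x) = x V_{g,n-1}(x, L₂, …, L̂ⱼ, …, Lₙ)`. As `A'` is odd, `A''` is even and the term contributes
  `A''(Lⱼ)`, which by symmetry of `V_{g,n-1}` is `∂/∂Lⱼ (Lⱼ V_{g,n-1})`.

Everything is carried out with one-variable polynomials over `ℂ`. That the double integrals have
vanishing second derivative needs no separate smoothness argument: their sum is the difference of
two polynomials, and a polynomial of the form `z⁴ E(z)` with `E` continuous has no coefficient in
degree two (`DivFour.derivative_derivative`).
-/

open scoped Real Topology
open MeasureTheory Filter

noncomputable section

/-! ### Restriction to one variable -/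

open Polynomial in
/-- The one-variable polynomial obtained by substituting the polynomials `w i` for the variables
of `p`. -/
def slice {n : ℕ} (p : MvPolynomial (Fin n) ℝ) (w : Fin n → ℂ[X]) : ℂ[X] :=
  MvPolynomial.eval₂ (C.comp (algebraMap ℝ ℂ)) w p

open Polynomial in
lemma eval_slice {n : ℕ} (p : MvPolynomial (Fin n) ℝ) (w : Fin n → ℂ[X]) (z : ℂ) :
    (slice p w).eval z = ev p (fun i => (w i).eval z) := by
  have := MvPolynomial.hom_eval₂ p (C.comp (algebraMap ℝ ℂ)) (evalRingHom z) w
  simp only [coe_evalRingHom] at this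
  rw [slice, this, ev]
  congr 1
  ext x
  simp

open Polynomial in
lemma exists_poly_cons {m : ℕ} (p : MvPolynomial (Fin (m + 1)) ℝ) (t : Fin m → ℂ) :
    ∃ f : ℂ[X], ∀ z, ev p (Fin.cons z t) = f.eval z := by
  refine ⟨slice p (Fin.cons X fun i => C (t i)), fun z => ?_⟩
  rw [eval_slice]
  congr 1
  ext i
  refine Fin.cases ?_ (fun i => ?_) i <;> simp

open Polynomial in
lemma exists_poly_update {m : ℕ} (p : MvPolynomial (Fin m) ℝ) (t : Fin m → ℂ) (j : Fin m) :
    ∃ f : ℂ[X], ∀ z, ev p (Function.update t j z) = f.eval z := by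
  refine ⟨slice p (Function.update (fun i => C (t i)) j X), fun z => ?_⟩
  rw [eval_slice]
  congr 1
  ext i
  by_cases hi : i = j
  · subst hi; simp
  · simp [hi]

lemma continuous_ev {n : ℕ} (p : MvPolynomial (Fin n) ℝ) : Continuous (ev p) := by
  have h : ev p = fun z => MvPolynomial.eval z (MvPolynomial.map (algebraMap ℝ ℂ) p) := by
    ext z
    rw [MvPolynomial.eval_map]
    rfl
  rw [h]
  exact MvPolynomial.continuous_eval _

lemma continuous_ev_tupIns {β : Type*} [TopologicalSpace β] {m : ℕ} (I : Finset (Fin m))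
    (p : MvPolynomial (Fin (I.card + 1)) ℝ) (t : Fin m → ℂ) (u : β → ℂ) (hu : Continuous u) :
    Continuous fun b => ev p (tupIns (u b) t I) := by
  refine (continuous_ev p).comp (continuous_pi fun i => ?_)
  refine Fin.cases ?_ (fun i => ?_) i
  · simpa [tupIns] using hu
  · simpa [tupIns] using continuous_const

/-! ### Integration of polynomials -/

open Polynomial in
lemma exists_antideriv (q : ℂ[X]) : ∃ A : ℂ[X], derivative A = q := by
  induction q using Polynomial.induction_on' with
  | add p q hp hq =>
    obtain ⟨A, rfl⟩ := hp
    obtain ⟨B, rfl⟩ := hq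
    exact ⟨A + B, by simp⟩
  | monomial n c =>
    refine ⟨monomial (n + 1) (c / (n + 1)), ?_⟩
    have : (n : ℂ) + 1 ≠ 0 := by exact_mod_cast n.succ_ne_zero
    rw [derivative_monomial]
    simp [this]

open Polynomial in
/-- The integral `pInt` of a polynomial is computed by the fundamental theorem of calculus along
the segment from `0` to `a`. -/
lemma pInt_derivative (A : ℂ[X]) (a : ℂ) :
    pInt (fun x => (derivative A).eval x) a = A.eval a - A.eval 0 := by
  have hd : ∀ s : ℝ, HasDerivAt (fun s : ℝ => A.eval ((s : ℂ) * a))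
      ((derivative A).eval ((s : ℂ) * a) * a) s := by
    intro s
    have h1 : HasDerivAt (fun z : ℂ => A.eval (z * a)) ((derivative A).eval ((s : ℂ) * a) * a)
        (s : ℂ) := by
      have h2 : HasDerivAt (fun z : ℂ => z * a) a (s : ℂ) := by
        simpa using (hasDerivAt_id (s : ℂ)).mul_const a
      exact (A.hasDerivAt ((s : ℂ) * a)).comp (s : ℂ) h2
    exact h1.comp_ofReal
  have hc : Continuous fun s : ℝ => (derivative A).eval ((s : ℂ) * a) * a := by fun_prop
  have := intervalIntegral.integral_eq_sub_of_hasDerivAt (a := 0) (b := 1) (fun s _ => hd s)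
    (hc.intervalIntegrable _ _)
  rw [intervalIntegral.integral_mul_const] at this
  rw [pInt, mul_comm, this]
  simp

/-! ### The double integrals vanish to fourth order -/

/-- `D` is `z ^ 4` times a continuous function; this makes sense before `D` is known to be
differentiable. -/
def DivFour (D : ℂ → ℂ) : Prop := ∃ E : ℂ → ℂ, Continuous E ∧ ∀ z, D z = z ^ 4 * E z

namespace DivFour

lemma zero : DivFour fun _ => 0 := ⟨fun _ => 0, continuous_const, by simp⟩

lemma add {D D' : ℂ → ℂ} (h : DivFour D) (h' : DivFour D') : DivFour fun z => D z + D' z := by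
  obtain ⟨E, hE, h⟩ := h
  obtain ⟨E', hE', h'⟩ := h'
  exact ⟨fun z => E z + E' z, by fun_prop, fun z => by simp only [h, h']; ring⟩

lemma const_mul {D : ℂ → ℂ} (c : ℂ) (h : DivFour D) : DivFour fun z => c * D z := by
  obtain ⟨E, hE, h⟩ := h
  exact ⟨fun z => c * E z, by fun_prop, fun z => by simp only [h]; ring⟩

lemma sum {ι : Type*} (s : Finset ι) {D : ι → ℂ → ℂ} (h : ∀ i ∈ s, DivFour (D i)) :
    DivFour fun z => ∑ i ∈ s, D i z := by
  classical
  induction s using Finset.induction_on with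
  | empty => simpa using zero
  | insert i s hi ih =>
    simp only [Finset.sum_insert hi]
    exact (h i (by simp)).add (ih fun k hk => h k (by simp [hk]))

lemma ite {P : Prop} [Decidable P] {D : ℂ → ℂ} (h : DivFour D) :
    DivFour fun z => if P then D z else 0 := by
  by_cases hP : P
  · simpa [hP] using h
  · simpa [hP] using zero

/-- After the rescaling built into `pInt`, the integrand is homogeneous: two powers of `z` come
from the factors `x` and `y`, two from the lengths of the segments of integration. -/
lemma pInt_pInt {H : ℂ → ℂ → ℂ} (hH : Continuous fun q : ℂ × ℂ => H q.1 q.2) :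
    DivFour fun z => pInt (fun y => pInt (fun x => H x y * x * y) (z - y)) z := by
  have hH' : ∀ {β : Type} [TopologicalSpace β] {u v : β → ℂ}, Continuous u → Continuous v →
      Continuous fun b => H (u b) (v b) := fun hu hv => hH.comp (hu.prodMk hv)
  refine ⟨fun z => ∫ s in (0:ℝ)..(1:ℝ), ∫ r in (0:ℝ)..(1:ℝ),
    (1 - (s : ℂ)) ^ 2 * r * s * H ((r : ℂ) * (z - s * z)) (s * z), ?_, fun z => ?_⟩
  · refine intervalIntegral.continuous_parametric_intervalIntegral_of_continuous' ?_ 0 1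
    refine intervalIntegral.continuous_parametric_intervalIntegral_of_continuous' ?_ 0 1
    refine Continuous.mul (by fun_prop) (hH' (by fun_prop) (by fun_prop))
  · simp only [pInt, ← intervalIntegral.integral_const_mul]
    congr 1
    ext s
    congr 1
    ext r
    ring

open Polynomial in
lemma exists_eq_X_mul {p : ℂ[X]} {E : ℂ → ℂ} (hE : Continuous E) (h : ∀ z, p.eval z = z * E z) :
    ∃ q : ℂ[X], p = X * q ∧ ∀ z, q.eval z = E z := by
  have h0 : p.eval 0 = 0 := by simpa using h 0
  obtain ⟨q, rfl⟩ := (X_dvd_iff (f := p)).2 (by rwa [coeff_zero_eq_eval_zero])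
  refine ⟨q, rfl, fun z => ?_⟩
  have : (fun z => q.eval z) = E := by
    refine Continuous.ext_on (dense_compl_singleton (0 : ℂ)) q.continuous hE fun z hz => ?_
    have := h z
    rw [eval_mul, eval_X] at this
    exact mul_left_cancel₀ hz this
  exact congrFun this z

open Polynomial in
lemma derivative_derivative {p : ℂ[X]} (h : DivFour fun z => p.eval z) :
    (derivative (derivative p)).eval 0 = 0 := by
  obtain ⟨E, hE, h⟩ := h
  obtain ⟨q, rfl, hq⟩ := exists_eq_X_mul (p := p) (E := fun z => z ^ 3 * E z) (by fun_prop)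
    (fun z => (h z).trans (by ring))
  obtain ⟨r, rfl, hr⟩ := exists_eq_X_mul (p := q) (E := fun z => z ^ 2 * E z) (by fun_prop)
    (fun z => by rw [hq]; ring)
  have hr0 : r.eval 0 = 0 := by simp [hr]
  simp [derivative_mul, hr0]

end DivFour

/-! ### Parity and symmetry -/

open Polynomial in
lemma eval_derivative_of_odd {G : ℂ[X]} (h : ∀ z, G.eval (-z) = -G.eval z) (z : ℂ) :
    (derivative G).eval (-z) = (derivative G).eval z := by
  have h1 : G.comp (-X) = -G := Polynomial.funext fun z => by simpa using h z
  have := congrArg (fun p => (derivative p).eval z) h1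
  simpa [derivative_comp] using this

open Polynomial in
lemma eval_derivative_of_even {G : ℂ[X]} (h : ∀ z, G.eval (-z) = G.eval z) (z : ℂ) :
    (derivative G).eval (-z) = -(derivative G).eval z := by
  have h1 : G.comp (-X) = G := Polynomial.funext fun z => by simpa using h z
  have := congrArg (fun p => (derivative p).eval z) h1
  simp [derivative_comp] at this
  linear_combination -this

lemma ev_comp_equiv (F : StarFamily) {g n m : ℕ} (hn : n = m) (hs : StableIdx g m)
    (σ : Fin n ≃ Fin m) (w : Fin m → ℂ) : ev (F.V g n) (w ∘ σ) = ev (F.V g m) w := by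
  subst hn
  exact F.symm g n hs σ w

lemma card_compl_singleton_add_one {m : ℕ} (j : Fin m) :
    ({j}ᶜ : Finset (Fin m)).card + 1 = m := by
  have := j.2
  rw [Finset.card_compl, Finset.card_singleton, Fintype.card_fin]
  omega

/-- By symmetry, it is irrelevant whether the new variable replaces the `j`-th one or is put in
front of the others. -/
lemma ev_tupIns_compl_singleton (F : StarFamily) {g m : ℕ} (hs : StableIdx g m) (t : Fin m → ℂ)
    (j : Fin m) (x : ℂ) :
    ev (F.V g (({j}ᶜ : Finset (Fin m)).card + 1)) (tupIns x t ({j}ᶜ : Finset (Fin m))) =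
      ev (F.V g m) (Function.update t j x) := by
  have hcard := card_compl_singleton_add_one j
  let e : Fin (({j}ᶜ : Finset (Fin m)).card + 1) → Fin m :=
    Fin.cons j fun i => ((({j}ᶜ : Finset (Fin m)).orderIsoOfFin rfl) i).1
  have hne : ∀ i, ((({j}ᶜ : Finset (Fin m)).orderIsoOfFin rfl) i).1 ≠ j := fun i => by
    have := ((({j}ᶜ : Finset (Fin m)).orderIsoOfFin rfl) i).2
    rwa [Finset.mem_compl, Finset.mem_singleton] at this
  have he : Function.Injective e := by
    refine Fin.cons_injective_iff.2 ⟨?_, ?_⟩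
    · rintro ⟨i, hi⟩
      exact hne i hi
    · exact Subtype.val_injective.comp (OrderIso.injective _)
  have hb : Function.Bijective e :=
    (Fintype.bijective_iff_injective_and_card e).2 ⟨he, by simpa using hcard⟩
  rw [← ev_comp_equiv F hcard hs (Equiv.ofBijective e hb)]
  congr 1
  ext i
  refine Fin.cases ?_ (fun i => ?_) i
  · simp [tupIns, e]
  · exact (Function.update_of_ne (hne i) x t).symm

/-! ### The second derivative of the recursion at zero -/

open Polynomial in
/-- For a (★)-family, at `(g, n) = (g, m+1)` with `n ≥ 2` and
`2g - 3 + n > 0`, given the first-derivative identity of Do–Norbury, the second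
derivative of `V_{g,n}` at `L₁ = 2πi` is computed as follows. -/
theorem second_derivative_at_two_pi_i (F : StarFamily) (g m : ℕ) (hm : 1 ≤ m)
    (h : 2 < 2 * g + m)
    (hfirst : ∀ t : Fin m → ℂ,
      deriv (fun z => ev (F.V g (m + 1)) (Fin.cons z t)) (2 * (π : ℂ) * Complex.I) =
        2 * (π : ℂ) * Complex.I * ((2 * g + m - 2 : ℕ) : ℂ) * ev (F.V g m) t) :
    ∀ t : Fin m → ℂ,
      deriv (fun z => deriv (fun w => ev (F.V g (m + 1)) (Fin.cons w t)) z)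
          (2 * (π : ℂ) * Complex.I) =
        ∑ k : Fin m, deriv (fun s => s * ev (F.V g m) (Function.update t k s)) (t k)
          - 2 * ((2 * g + m - 2 : ℕ) : ℂ) * ev (F.V g m) t := by
  intro t
  have hs : StableIdx g m := h
  have hs' : StableIdx g (m + 1) := by unfold StableIdx at *; omega
  set a : ℂ := 2 * (π : ℂ) * Complex.I with ha
  have ha0 : a ≠ 0 := by simp [ha, Real.pi_ne_zero]
  obtain ⟨f, hf⟩ := exists_poly_cons (F.V g (m + 1)) t
  have hf_even : ∀ z, f.eval (-z) = f.eval z := fun z => by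
    simpa [← hf] using F.even g (m + 1) hs' 0 (Fin.cons z t : Fin (m + 1) → ℂ)
  choose q hq using fun j => exists_poly_update (F.V g m) t j
  have hq_even : ∀ j z, (q j).eval (-z) = (q j).eval z := fun j z => by
    simpa [← hq] using F.even g m hs j (Function.update t j z)
  choose A hA using fun j => exists_antideriv (X * q j)
  have hfirst' := hfirst t
  simp only [hf, Polynomial.deriv] at hfirst' ⊢
  simp only [hq]
  have hterm : ∀ k, deriv (fun s => s * (q k).eval s) (t k) =
      (derivative (derivative (A k))).eval (t k) := fun k => by
    rw [hA, ← Polynomial.deriv]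
    simp
  simp only [hterm]
  have hA_even : ∀ k z, (derivative (derivative (A k))).eval (-z) =
      (derivative (derivative (A k))).eval z := fun k => by
    refine eval_derivative_of_odd fun z => ?_
    rw [hA]
    simp [hq_even]
  set G : ℂ[X] := X * f with hG
  have hG_odd : (derivative (derivative G)).eval (-a) = -(derivative (derivative G)).eval a := by
    refine eval_derivative_of_even (eval_derivative_of_odd fun z => ?_) a
    simp [hG, hf_even]
  -- The polynomial `T` is the left side of the recursion minus the terms with simple integrals.
  set T : ℂ[X] := C (2 * a)⁻¹ * (G.comp (X + C a) - G.comp (X - C a)) -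
    C (1 / 2) * ∑ j, ((A j).comp (X + C (t j)) - C ((A j).eval 0) +
      ((A j).comp (X - C (t j)) - C ((A j).eval 0))) with hT
  have hDiv : DivFour fun z => T.eval z := by
    have hstar := fun z : ℂ => F.star g m (by omega) (Fin.cons z t)
    simp only [StarEq, newRHS, Fin.cons_zero, Fin.tail_cons, Fin.cons_succ, ← ha, hf] at hstar
    have hpInt : ∀ j b, pInt (fun x => ev (F.V g (({j}ᶜ : Finset (Fin m)).card + 1))
        (tupIns x t ({j}ᶜ : Finset (Fin m))) * x) b = (A j).eval b - (A j).eval 0 := by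
      intro j b
      rw [← pInt_derivative, hA]
      congr 1
      ext x
      rw [ev_tupIns_compl_singleton F hs, hq, eval_mul, eval_X, mul_comm]
    have hst : ∀ j : Fin m, StableIdx g (({j}ᶜ : Finset (Fin m)).card + 1) := fun j => by
      rwa [card_compl_singleton_add_one]
    simp only [hpInt, hst, if_true] at hstar
    have hT' : ∀ z, T.eval z =
        ((z + a) * f.eval (z + a) - (z - a) * f.eval (z - a)) / (4 * (π : ℂ) * Complex.I) -
          1 / 2 * ∑ j, ((A j).eval (z + t j) - (A j).eval 0 +
            ((A j).eval (z - t j) - (A j).eval 0)) := fun z => by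
      simp only [hT, hG, eval_sub, eval_mul, eval_C, eval_comp, eval_add, eval_X, eval_finsetSum]
      rw [ha]
      ring
    simp only [hT', fun z => sub_eq_of_eq_add (hstar z)]
    refine DivFour.add ?_ ?_
    · refine DivFour.ite (DivFour.const_mul _ (DivFour.pInt_pInt ?_))
      refine (continuous_ev _).comp (continuous_pi fun i => ?_)
      refine Fin.cases ?_ (fun i => ?_) i
      · simpa using continuous_fst
      · refine Fin.cases ?_ (fun i => ?_) i
        · simpa using continuous_snd
        · simpa using continuous_const
    · refine DivFour.const_mul _ (DivFour.sum _ fun g₁ _ => DivFour.sum _ fun I _ =>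
        DivFour.ite (DivFour.pInt_pInt ?_))
      exact (continuous_ev_tupIns _ _ _ _ continuous_fst).mul
        (continuous_ev_tupIns _ _ _ _ continuous_snd)
  have hzero := hDiv.derivative_derivative
  have hkey : (derivative (derivative T)).eval 0 =
      (2 * a)⁻¹ * ((derivative (derivative G)).eval a - (derivative (derivative G)).eval (-a)) -
      (1 / 2) * ∑ j, ((derivative (derivative (A j))).eval (t j) +
        (derivative (derivative (A j))).eval (-(t j))) := by
    simp [hT, derivative_comp, eval_finsetSum]
  rw [hkey, hG_odd] at hzero
  simp only [hA_even, ← two_mul, ← Finset.mul_sum] at hzero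
  have hG2 : (derivative (derivative G)).eval a =
      2 * (derivative f).eval a + a * (derivative (derivative f)).eval a := by
    simp [hG, derivative_mul]
    ring
  rw [hG2, hfirst'] at hzero
  field_simp at hzero
  linear_combination (1 / 2) * hzero

end
end
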